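/- For every distortion pair (d1,d2) ∈ ℝ₊², the rate-distortion function satisfies the cut-set lower bound R(d1,d2) ≥ max{ R_{X|Y}(d1), R_{Y|X}(d2) }. -/

import Mathlib

open scoped BigOperators Classical

noncomputable section

namespace TWR

/-- Base-2 Shannon entropy of a finitely supported distribution (with the
convention `0 * log 0 = 0`, automatic since `Real.logb 2 0 = 0`). -/
def H2 {α : Type} [Fintype α] (p : α → ℝ) : ℝ :=
  -∑ a, p a * Real.logb 2 (p a)

/-- `p` is a probability mass function. -/
def IsPmf {α : Type} [Fintype α] (p : α → ℝ) : Prop :=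
  (∀ a, 0 ≤ p a) ∧ ∑ a, p a = 1

/-- `W` is a conditional pmf. -/
def IsCondPmf {α β : Type} [Fintype β] (W : α → β → ℝ) : Prop :=
  ∀ a, IsPmf (W a)

/-- Mutual information `I(A;B)` (base 2) of a joint pmf on `α × β`. -/
def MI {α β : Type} [Fintype α] [Fintype β] (p : α × β → ℝ) : ℝ :=
  H2 (fun a => ∑ b, p (a, b)) + H2 (fun b => ∑ a, p (a, b)) - H2 p

/-- Conditional entropy `H(A|B)` of a joint pmf on `α × β`. -/
def condH {α β : Type} [Fintype α] [Fintype β] (p : α × β → ℝ) : ℝ :=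
  H2 p - H2 (fun b => ∑ a, p (a, b))

/-- Conditional mutual information `I(A;C|B)` of a joint pmf on `α × β × γ`,
conditioning on the middle coordinate (`I(A;C|B) = H(A,B)+H(B,C)-H(A,B,C)-H(B)`). -/
def condMI {α β γ : Type} [Fintype α] [Fintype β] [Fintype γ] (p : α × β × γ → ℝ) : ℝ :=
  H2 (fun ab : α × β => ∑ c, p (ab.1, ab.2, c)) +
    H2 (fun bc : β × γ => ∑ a, p (a, bc.1, bc.2)) -
    H2 p - H2 (fun b : β => ∑ a, ∑ c, p (a, b, c))

/-- Markov chain `A − B − C` for a joint pmf on `α × β × γ`. -/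
def Markov {α β γ : Type} [Fintype α] [Fintype β] [Fintype γ] (p : α × β × γ → ℝ) : Prop :=
  ∀ a b c, p (a, b, c) * (∑ a', ∑ c', p (a', b, c')) =
    (∑ c', p (a, b, c')) * (∑ a', p (a', b, c))

variable {𝒳 𝒴 Xh Yh 𝒲 𝒰 𝒱 : Type}
variable [Fintype 𝒳] [Fintype 𝒴] [Fintype Xh] [Fintype Yh]
variable [Fintype 𝒲] [Fintype 𝒰] [Fintype 𝒱]

/-- The i.i.d. block source. -/
def iid (q : 𝒳 × 𝒴 → ℝ) (n : ℕ) : (Fin n → 𝒳) × (Fin n → 𝒴) → ℝ :=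
  fun xy => ∏ i, q (xy.1 i, xy.2 i)

/-- Average distortion at receiver 1 of the RD code `(f, g1, ·)`. -/
def Delta1 (q : 𝒳 × 𝒴 → ℝ) (δ1 : 𝒳 → Xh → ℝ) {n m : ℕ}
    (f : (Fin n → 𝒳) × (Fin n → 𝒴) → Fin m)
    (g1 : Fin m × (Fin n → 𝒴) → Fin n → Xh) : ℝ :=
  ∑ xy : (Fin n → 𝒳) × (Fin n → 𝒴),
    iid q n xy * ((n : ℝ)⁻¹ * ∑ i, δ1 (xy.1 i) (g1 (f xy, xy.2) i))

/-- Average distortion at receiver 2 of the RD code `(f, ·, g2)`. -/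
def Delta2 (q : 𝒳 × 𝒴 → ℝ) (δ2 : 𝒴 → Yh → ℝ) {n m : ℕ}
    (f : (Fin n → 𝒳) × (Fin n → 𝒴) → Fin m)
    (g2 : Fin m × (Fin n → 𝒳) → Fin n → Yh) : ℝ :=
  ∑ xy : (Fin n → 𝒳) × (Fin n → 𝒴),
    iid q n xy * ((n : ℝ)⁻¹ * ∑ i, δ2 (xy.2 i) (g2 (f xy, xy.1) i))

/-- `r` is a `(d1,d2)`-achievable rate (source coding). -/
def RDAchievable (q : 𝒳 × 𝒴 → ℝ) (δ1 : 𝒳 → Xh → ℝ) (δ2 : 𝒴 → Yh → ℝ)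
    (d1 d2 r : ℝ) : Prop :=
  ∀ ε > (0 : ℝ), ∃ (n m : ℕ) (f : (Fin n → 𝒳) × (Fin n → 𝒴) → Fin m)
    (g1 : Fin m × (Fin n → 𝒴) → Fin n → Xh)
    (g2 : Fin m × (Fin n → 𝒳) → Fin n → Yh),
    0 < n ∧ Real.logb 2 m / n ≤ r + ε ∧
    Delta1 q δ1 f g1 ≤ d1 + ε ∧ Delta2 q δ2 f g2 ≤ d2 + ε

/-- The rate-distortion function `R(d1,d2)`. -/
def RD (q : 𝒳 × 𝒴 → ℝ) (δ1 : 𝒳 → Xh → ℝ) (δ2 : 𝒴 → Yh → ℝ) (d1 d2 : ℝ) : ℝ :=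
  sInf {r : ℝ | 0 ≤ r ∧ RDAchievable q δ1 δ2 d1 d2 r}

/-- `r` is `(d1,d2)`-achievable with common reconstructions. -/
def CRAchievable (q : 𝒳 × 𝒴 → ℝ) (δ1 : 𝒳 → Xh → ℝ) (δ2 : 𝒴 → Yh → ℝ)
    (d1 d2 r : ℝ) : Prop :=
  ∀ ε > (0 : ℝ), ∃ (n m : ℕ) (f : (Fin n → 𝒳) × (Fin n → 𝒴) → Fin m)
    (g1 : Fin m × (Fin n → 𝒴) → Fin n → Xh)
    (g2 : Fin m × (Fin n → 𝒳) → Fin n → Yh)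
    (φ1 : Fin m × (Fin n → 𝒴) → Fin n → Yh)
    (φ2 : Fin m × (Fin n → 𝒳) → Fin n → Xh),
    0 < n ∧ Real.logb 2 m / n ≤ r + ε ∧
    Delta1 q δ1 f g1 ≤ d1 + ε ∧ Delta2 q δ2 f g2 ≤ d2 + ε ∧
    (∑ xy : (Fin n → 𝒳) × (Fin n → 𝒴),
      if φ2 (f xy, xy.1) = g1 (f xy, xy.2) then 0 else iid q n xy) ≤ ε ∧
    (∑ xy : (Fin n → 𝒳) × (Fin n → 𝒴),
      if φ1 (f xy, xy.2) = g2 (f xy, xy.1) then 0 else iid q n xy) ≤ ε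

/-- The common-reconstruction rate-distortion function `R_CR(d1,d2)`. -/
def CRRD (q : 𝒳 × 𝒴 → ℝ) (δ1 : 𝒳 → Xh → ℝ) (δ2 : 𝒴 → Yh → ℝ) (d1 d2 : ℝ) : ℝ :=
  sInf {r : ℝ | 0 ≤ r ∧ CRAchievable q δ1 δ2 d1 d2 r}

/-- The conditional rate-distortion function `R_{X|Y}(d1)`. -/
def condRD (q : 𝒳 × 𝒴 → ℝ) (δ1 : 𝒳 → Xh → ℝ) (d1 : ℝ) : ℝ :=
  sInf {r : ℝ | ∃ W : 𝒳 × 𝒴 → Xh → ℝ, IsCondPmf W ∧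
    (∑ x, ∑ y, ∑ xh, q (x, y) * W (x, y) xh * δ1 x xh) ≤ d1 ∧
    r = condMI (fun t : 𝒳 × 𝒴 × Xh => q (t.1, t.2.1) * W (t.1, t.2.1) t.2.2)}

/-- Swap the two components of a joint source. -/
def swap (q : 𝒳 × 𝒴 → ℝ) : 𝒴 × 𝒳 → ℝ := fun t => q (t.2, t.1)

/-- The marginal rate-distortion function `R_X(d)`. -/
def margRD (qX : 𝒳 → ℝ) (δ1 : 𝒳 → Xh → ℝ) (d1 : ℝ) : ℝ :=
  sInf {r : ℝ | ∃ W : 𝒳 → Xh → ℝ, IsCondPmf W ∧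
    (∑ x, ∑ xh, qX x * W x xh * δ1 x xh) ≤ d1 ∧
    r = MI (fun t : 𝒳 × Xh => qX t.1 * W t.1 t.2)}

def margX (q : 𝒳 × 𝒴 → ℝ) : 𝒳 → ℝ := fun x => ∑ y, q (x, y)
def margY (q : 𝒳 × 𝒴 → ℝ) : 𝒴 → ℝ := fun y => ∑ x, q (x, y)

/-- The joint rate-distortion function `R_{XY}(d1,d2)`. -/
def jointRD (q : 𝒳 × 𝒴 → ℝ) (δ1 : 𝒳 → Xh → ℝ) (δ2 : 𝒴 → Yh → ℝ) (d1 d2 : ℝ) : ℝ :=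
  sInf {r : ℝ | ∃ W : 𝒳 × 𝒴 → Xh × Yh → ℝ, IsCondPmf W ∧
    (∑ xy : 𝒳 × 𝒴, ∑ z : Xh × Yh, q xy * W xy z * δ1 xy.1 z.1) ≤ d1 ∧
    (∑ xy : 𝒳 × 𝒴, ∑ z : Xh × Yh, q xy * W xy z * δ2 xy.2 z.2) ≤ d2 ∧
    r = MI (fun t : (𝒳 × 𝒴) × (Xh × Yh) => q t.1 * W t.1 t.2)}

/-- The Wyner–Ziv rate-distortion function `R^{WZ}_{X|Y}(d1)`
(with auxiliary alphabet of cardinality `|𝒳| + 1`). -/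
def wzRD (q : 𝒳 × 𝒴 → ℝ) (δ1 : 𝒳 → Xh → ℝ) (d1 : ℝ) : ℝ :=
  sInf {r : ℝ | ∃ p : Fin (Fintype.card 𝒳 + 1) × 𝒳 × 𝒴 → ℝ, IsPmf p ∧
    (∀ x y, (∑ a, p (a, x, y)) = q (x, y)) ∧ Markov p ∧
    (∃ π1 : Fin (Fintype.card 𝒳 + 1) × 𝒴 → Xh,
      (∑ a, ∑ x, ∑ y, p (a, x, y) * δ1 x (π1 (a, y))) ≤ d1) ∧
    r = condMI (fun t : 𝒳 × 𝒴 × Fin (Fintype.card 𝒳 + 1) => p (t.2.2, t.1, t.2.1))}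

/-- The set over which the single-letter CR formula
`max{I(X;X̂,Ŷ|Y), I(Y;X̂,Ŷ|X)}` is minimised. -/
def crFormulaSet (q : 𝒳 × 𝒴 → ℝ) (δ1 : 𝒳 → Xh → ℝ) (δ2 : 𝒴 → Yh → ℝ)
    (d1 d2 : ℝ) : Set ℝ :=
  {r : ℝ | ∃ W : 𝒳 × 𝒴 → Xh × Yh → ℝ, IsCondPmf W ∧
    (∑ x, ∑ y, ∑ z : Xh × Yh, q (x, y) * W (x, y) z * δ1 x z.1) ≤ d1 ∧
    (∑ x, ∑ y, ∑ z : Xh × Yh, q (x, y) * W (x, y) z * δ2 y z.2) ≤ d2 ∧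
    r = max
      (condMI (fun t : 𝒳 × 𝒴 × (Xh × Yh) => q (t.1, t.2.1) * W (t.1, t.2.1) t.2.2))
      (condMI (fun t : 𝒴 × 𝒳 × (Xh × Yh) => q (t.2.1, t.1) * W (t.2.1, t.1) t.2.2))}

/-- Joint law of source blocks and channel outputs for a JSC encoder. -/
def jscP (q : 𝒳 × 𝒴 → ℝ) (qUV : 𝒲 → 𝒰 × 𝒱 → ℝ) {n m : ℕ}
    (f : (Fin n → 𝒳) × (Fin n → 𝒴) → Fin m → 𝒲)
    (x : Fin n → 𝒳) (y : Fin n → 𝒴) (u : Fin m → 𝒰) (v : Fin m → 𝒱) : ℝ :=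
  (∏ i, q (x i, y i)) * ∏ j, qUV (f (x, y) j) (u j, v j)

/-- `(d1,d2)` is achievable by joint source-channel coding with source rate `κs`
and channel rate `κc` (bandwidth expansion `κc/κs`). -/
def JSCAchievable (q : 𝒳 × 𝒴 → ℝ) (qUV : 𝒲 → 𝒰 × 𝒱 → ℝ)
    (δ1 : 𝒳 → Xh → ℝ) (δ2 : 𝒴 → Yh → ℝ) (κs κc d1 d2 : ℝ) : Prop :=
  ∀ ε > (0 : ℝ), ∃ (t n m : ℕ) (f : (Fin n → 𝒳) × (Fin n → 𝒴) → Fin m → 𝒲)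
    (g1 : (Fin m → 𝒰) × (Fin n → 𝒴) → Fin n → Xh)
    (g2 : (Fin m → 𝒱) × (Fin n → 𝒳) → Fin n → Yh),
    0 < t ∧ (n : ℝ) = κs * t ∧ (m : ℝ) = κc * t ∧
    (∑ x : Fin n → 𝒳, ∑ y : Fin n → 𝒴, ∑ u : Fin m → 𝒰, ∑ v : Fin m → 𝒱,
      jscP q qUV f x y u v * ((n : ℝ)⁻¹ * ∑ i, δ1 (x i) (g1 (u, y) i))) ≤ d1 + ε ∧
    (∑ x : Fin n → 𝒳, ∑ y : Fin n → 𝒴, ∑ u : Fin m → 𝒰, ∑ v : Fin m → 𝒱,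
      jscP q qUV f x y u v * ((n : ℝ)⁻¹ * ∑ i, δ2 (y i) (g2 (v, x) i))) ≤ d2 + ε

/-- `(d1,d2)` is achievable by joint source-channel coding with common
reconstructions, source rate `κs` and channel rate `κc`. -/
def CRJSCAchievable (q : 𝒳 × 𝒴 → ℝ) (qUV : 𝒲 → 𝒰 × 𝒱 → ℝ)
    (δ1 : 𝒳 → Xh → ℝ) (δ2 : 𝒴 → Yh → ℝ) (κs κc d1 d2 : ℝ) : Prop :=
  ∀ ε > (0 : ℝ), ∃ (t n m : ℕ) (f : (Fin n → 𝒳) × (Fin n → 𝒴) → Fin m → 𝒲)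
    (g1 : (Fin m → 𝒰) × (Fin n → 𝒴) → Fin n → Xh)
    (g2 : (Fin m → 𝒱) × (Fin n → 𝒳) → Fin n → Yh)
    (φ1 : (Fin m → 𝒰) × (Fin n → 𝒴) → Fin n → Yh)
    (φ2 : (Fin m → 𝒱) × (Fin n → 𝒳) → Fin n → Xh),
    0 < t ∧ (n : ℝ) = κs * t ∧ (m : ℝ) = κc * t ∧
    (∑ x : Fin n → 𝒳, ∑ y : Fin n → 𝒴, ∑ u : Fin m → 𝒰, ∑ v : Fin m → 𝒱,
      jscP q qUV f x y u v * ((n : ℝ)⁻¹ * ∑ i, δ1 (x i) (g1 (u, y) i))) ≤ d1 + ε ∧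
    (∑ x : Fin n → 𝒳, ∑ y : Fin n → 𝒴, ∑ u : Fin m → 𝒰, ∑ v : Fin m → 𝒱,
      jscP q qUV f x y u v * ((n : ℝ)⁻¹ * ∑ i, δ2 (y i) (g2 (v, x) i))) ≤ d2 + ε ∧
    (∑ x : Fin n → 𝒳, ∑ y : Fin n → 𝒴, ∑ u : Fin m → 𝒰, ∑ v : Fin m → 𝒱,
      if φ2 (v, x) = g1 (u, y) then 0 else jscP q qUV f x y u v) ≤ ε ∧
    (∑ x : Fin n → 𝒳, ∑ y : Fin n → 𝒴, ∑ u : Fin m → 𝒰, ∑ v : Fin m → 𝒱,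
      if φ1 (u, y) = g2 (v, x) then 0 else jscP q qUV f x y u v) ≤ ε

/-- `I(W;U)` under the joint law `pW · qUV` (U-marginal of the broadcast channel). -/
def chMIU (qUV : 𝒲 → 𝒰 × 𝒱 → ℝ) (pW : 𝒲 → ℝ) : ℝ :=
  MI (fun t : 𝒲 × 𝒰 => pW t.1 * ∑ v, qUV t.1 (t.2, v))

/-- `I(W;V)` under the joint law `pW · qUV` (V-marginal of the broadcast channel). -/
def chMIV (qUV : 𝒲 → 𝒰 × 𝒱 → ℝ) (pW : 𝒲 → ℝ) : ℝ :=
  MI (fun t : 𝒲 × 𝒱 => pW t.1 * ∑ u, qUV t.1 (u, t.2))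

/-- The doubly symmetric binary source with crossover probability `ρ`. -/
def dsbs (ρ : ℝ) : Bool × Bool → ℝ :=
  fun t => if t.1 = t.2 then (1 - ρ) / 2 else ρ / 2

/-- The Hamming distortion measure. -/
def dHam {α : Type} : α → α → ℝ := fun a b => if a = b then 0 else 1

/-- The binary entropy function (base 2). -/
def binEnt (x : ℝ) : ℝ := -(x * Real.logb 2 x) - (1 - x) * Real.logb 2 (1 - x)

/-- A difference distortion measure built from a per-letter function of the
(modular) difference. -/
def diffD {l : ℕ} (δ : Fin l → ℝ) : Fin l → Fin l → ℝ := fun a b => δ (a - b)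

/-- Capacity of the modulo-additive channel with noise `pN` and input
distortion constraint `d`. -/
def Cadd {l : ℕ} (δ : Fin l → ℝ) (d : ℝ) (pN : Fin l → ℝ) : ℝ :=
  sSup {r : ℝ | ∃ pW : Fin l → ℝ, IsPmf pW ∧ (∑ w, pW w * δ w) ≤ d ∧
    r = MI (fun t : Fin l × Fin l => pW t.1 * pN (t.2 - t.1))}

/-- The minimax (worst-noise) capacity under distortion constraint `d`. -/
def Cworst {l : ℕ} (δ : Fin l → ℝ) (d : ℝ) : ℝ :=
  sInf {r : ℝ | ∃ pN : Fin l → ℝ, IsPmf pN ∧ (∑ x, pN x * δ x) ≤ d ∧ r = Cadd δ d pN}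

/-- Wyner's common information `K(X;Y)` (auxiliary alphabet of size 4). -/
def wynerK (q : 𝒳 × 𝒴 → ℝ) : ℝ :=
  sInf {r : ℝ | ∃ W : 𝒳 × 𝒴 → Fin 4 → ℝ, IsCondPmf W ∧
    Markov (fun t : 𝒳 × Fin 4 × 𝒴 => q (t.1, t.2.2) * W (t.1, t.2.2) t.2.1) ∧
    r = MI (fun t : (𝒳 × 𝒴) × Fin 4 => q t.1 * W t.1 t.2)}

/-- The one-description (Kimura–Uyematsu) upper bound `R_U*(d1,d2)`. -/
def oneDescUB (q : 𝒳 × 𝒴 → ℝ) (δ1 : 𝒳 → Xh → ℝ) (δ2 : 𝒴 → Yh → ℝ) (d1 d2 : ℝ) : ℝ :=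
  sInf {r : ℝ | ∃ W : 𝒳 × 𝒴 → Fin (Fintype.card 𝒳 * Fintype.card 𝒴 + 2) → ℝ,
    IsCondPmf W ∧
    (∃ π1 : Fin (Fintype.card 𝒳 * Fintype.card 𝒴 + 2) × 𝒴 → Xh,
      (∑ x, ∑ y, ∑ c, q (x, y) * W (x, y) c * δ1 x (π1 (c, y))) ≤ d1) ∧
    (∃ π2 : Fin (Fintype.card 𝒳 * Fintype.card 𝒴 + 2) × 𝒳 → Yh,
      (∑ x, ∑ y, ∑ c, q (x, y) * W (x, y) c * δ2 y (π2 (c, x))) ≤ d2) ∧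
    r = max
      (condMI (fun t : 𝒳 × 𝒴 × Fin (Fintype.card 𝒳 * Fintype.card 𝒴 + 2) =>
        q (t.1, t.2.1) * W (t.1, t.2.1) t.2.2))
      (condMI (fun t : 𝒴 × 𝒳 × Fin (Fintype.card 𝒳 * Fintype.card 𝒴 + 2) =>
        q (t.2.1, t.1) * W (t.2.1, t.1) t.2.2))}

end TWR
namespace TWR

lemma sum_condMI {α β γ : Type} [Fintype α] [Fintype β] [Fintype γ] (p : α × β × γ → ℝ) :
    condMI p = ∑ x, ∑ y, ∑ c, p (x, y, c) *
      (Real.logb 2 (p (x, y, c)) + Real.logb 2 (∑ a, ∑ c', p (a, y, c'))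
        - Real.logb 2 (∑ c', p (x, y, c')) - Real.logb 2 (∑ a, p (a, y, c))) := by
  have h1 : H2 (fun ab : α × β => ∑ c, p (ab.1, ab.2, c)) =
      -∑ x, ∑ y, ∑ c, p (x, y, c) * Real.logb 2 (∑ c', p (x, y, c')) := by
    simp only [H2, Fintype.sum_prod_type, Finset.sum_mul]
  have h2 : H2 (fun bc : β × γ => ∑ a, p (a, bc.1, bc.2)) =
      -∑ x, ∑ y, ∑ c, p (x, y, c) * Real.logb 2 (∑ a, p (a, y, c)) := by
    simp only [H2, Fintype.sum_prod_type, Finset.sum_mul]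
    congr 1
    rw [Finset.sum_comm]
    rw [show (∑ y : γ, ∑ x : β, ∑ i : α, p (i, x, y) * Real.logb 2 (∑ a, p (a, x, y))) =
      ∑ x : β, ∑ i : α, ∑ y : γ, p (i, x, y) * Real.logb 2 (∑ a, p (a, x, y)) by
        rw [Finset.sum_comm]
        exact Finset.sum_congr rfl fun _ _ => Finset.sum_comm]
    rw [Finset.sum_comm]
  have h3 : H2 (fun b : β => ∑ a, ∑ c, p (a, b, c)) =
      -∑ x, ∑ y, ∑ c, p (x, y, c) * Real.logb 2 (∑ a, ∑ c', p (a, y, c')) := by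
    simp only [H2, Finset.sum_mul]
    rw [Finset.sum_comm]
  have h4 : H2 p = -∑ x, ∑ y, ∑ c, p (x, y, c) * Real.logb 2 (p (x, y, c)) := by
    simp only [H2, Fintype.sum_prod_type]
  unfold condMI
  rw [h1, h2, h3, h4]
  simp only [mul_sub, mul_add, Finset.sum_sub_distrib, Finset.sum_add_distrib]
  ring

/-- Resampling identity. -/
lemma resample {A : Type} [Fintype A] (q : A → ℝ) {k : ℕ} (i : Fin (k + 1))
    (G : (Fin (k + 1) → A) → ℝ) :
    ∑ z : Fin (k + 1) → A, (∏ j, q (z j)) * G z =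
      ∑ a, q a * ∑ z' : Fin k → A, (∏ j, q (z' j)) * G (Fin.insertNth i a z') := by
  rw [← (Fin.insertNthEquiv (fun _ => A) i).sum_comp, Fintype.sum_prod_type]
  refine Finset.sum_congr rfl fun a _ => ?_
  rw [Finset.mul_sum]
  refine Finset.sum_congr rfl fun z' _ => ?_
  simp [Fin.insertNthEquiv, Fin.prod_univ_succAbove _ i, mul_assoc]

lemma iid_sum_one {A : Type} [Fintype A] (q : A → ℝ) (hq : ∑ a, q a = 1) (k : ℕ) :
    ∑ z : Fin k → A, ∏ j, q (z j) = 1 := by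
  have := (Finset.prod_univ_sum (fun _ : Fin k => (Finset.univ : Finset A))
    (fun _ a => q a)).symm
  simpa [hq] using this

/-- The single-letter test channel of coordinate `i`. -/
def chan {A Z : Type} [Fintype A] (q : A → ℝ) {k : ℕ}
    (h : (Fin (k + 1) → A) → Fin (k + 1) → Z) (i : Fin (k + 1)) : A → Z → ℝ :=
  fun a c => ∑ z' : Fin k → A, (∏ j, q (z' j)) *
    (if h (Fin.insertNth i a z') i = c then 1 else 0)

lemma chan_pmf {A Z : Type} [Fintype A] [Fintype Z] (q : A → ℝ) (hq : IsPmf q) {k : ℕ}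
    (h : (Fin (k + 1) → A) → Fin (k + 1) → Z) (i : Fin (k + 1)) : IsCondPmf (chan q h i) := by
  intro a
  refine ⟨fun c => ?_, ?_⟩
  · refine Finset.sum_nonneg fun z _ => mul_nonneg (Finset.prod_nonneg fun j _ => hq.1 _) ?_
    split_ifs <;> norm_num
  · unfold chan
    rw [Finset.sum_comm]
    simp only [← Finset.mul_sum]
    simpa using iid_sum_one q hq.2 k

lemma chan_sum {A Z : Type} [Fintype A] [Fintype Z] (q : A → ℝ) {k : ℕ}
    (h : (Fin (k + 1) → A) → Fin (k + 1) → Z) (i : Fin (k + 1)) (F : A → Z → ℝ) :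
    ∑ a, ∑ c, q a * chan q h i a c * F a c =
      ∑ z : Fin (k + 1) → A, (∏ j, q (z j)) * F (z i) (h z i) := by
  rw [resample q i]
  refine Finset.sum_congr rfl fun a _ => ?_
  simp only [chan, mul_assoc, ← Finset.mul_sum]
  congr 1
  simp only [Finset.sum_mul]
  rw [Finset.sum_comm]
  refine Finset.sum_congr rfl fun z _ => ?_
  simp [mul_assoc, ← Finset.mul_sum]

/-- The time-shared test channel. -/
def avgChan {A Z : Type} [Fintype A] (q : A → ℝ) {k : ℕ}
    (h : (Fin (k + 1) → A) → Fin (k + 1) → Z) : A → Z → ℝ :=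
  fun a c => ((k + 1 : ℕ) : ℝ)⁻¹ * ∑ i, chan q h i a c

lemma avgChan_pmf {A Z : Type} [Fintype A] [Fintype Z] (q : A → ℝ) (hq : IsPmf q) {k : ℕ}
    (h : (Fin (k + 1) → A) → Fin (k + 1) → Z) : IsCondPmf (avgChan q h) := by
  intro a
  refine ⟨fun c => ?_, ?_⟩
  · exact mul_nonneg (by positivity) (Finset.sum_nonneg fun i _ => (chan_pmf q hq h i a).1 c)
  · unfold avgChan
    rw [← Finset.mul_sum, Finset.sum_comm]
    simp only [(chan_pmf q hq h _ a).2]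
    simp
    field_simp

lemma avgChan_sum {A Z : Type} [Fintype A] [Fintype Z] (q : A → ℝ) {k : ℕ}
    (h : (Fin (k + 1) → A) → Fin (k + 1) → Z) (F : A → Z → ℝ) :
    ∑ a, ∑ c, q a * avgChan q h a c * F a c =
      ∑ z : Fin (k + 1) → A, (∏ j, q (z j)) *
        (((k + 1 : ℕ) : ℝ)⁻¹ * ∑ i, F (z i) (h z i)) := by
  have : ∀ z : Fin (k + 1) → A, (∏ j, q (z j)) *
        (((k + 1 : ℕ) : ℝ)⁻¹ * ∑ i, F (z i) (h z i)) =
      ((k + 1 : ℕ) : ℝ)⁻¹ * ∑ i, (∏ j, q (z j)) * F (z i) (h z i) := by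
    intro z
    rw [← Finset.mul_sum]; ring
  simp only [this]
  have hR : ∑ z : Fin (k + 1) → A, ∑ i, (∏ j, q (z j)) * F (z i) (h z i) =
      ∑ a, ∑ i, ∑ c, q a * chan q h i a c * F a c := by
    rw [Finset.sum_comm, Finset.sum_congr rfl fun i _ => (chan_sum q h i F).symm,
      Finset.sum_comm]
  rw [← Finset.mul_sum, hR, Finset.mul_sum]
  refine Finset.sum_congr rfl fun a _ => ?_
  rw [Finset.sum_comm, Finset.mul_sum]
  refine Finset.sum_congr rfl fun c _ => ?_
  simp only [avgChan, Finset.mul_sum, Finset.sum_mul]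
  refine Finset.sum_congr rfl fun i _ => ?_
  ring

lemma avgChan_pos {A Z : Type} [Fintype A] [Fintype Z] (q : A → ℝ) (hq : IsPmf q) {k : ℕ}
    (h : (Fin (k + 1) → A) → Fin (k + 1) → Z) (z : Fin (k + 1) → A)
    (hz : 0 < ∏ j, q (z j)) (i : Fin (k + 1)) :
    0 < q (z i) * avgChan q h (z i) (h z i) := by
  have := avgChan_sum q h (fun a c => if a = z i ∧ c = h z i then 1 else 0)
  have h2 : ∑ a, ∑ c, q a * avgChan q h a c * (if a = z i ∧ c = h z i then 1 else 0)
      = q (z i) * avgChan q h (z i) (h z i) := by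
    rw [Finset.sum_eq_single (z i), Finset.sum_eq_single (h z i)]
    · simp
    · intro c _ hc; simp [hc]
    · simp
    · intro a _ ha; simp [ha]
    · simp
  rw [h2] at this
  rw [this]
  have hnn : ∀ w : Fin (k + 1) → A, ∀ j, (0 : ℝ) ≤ if w j = z i ∧ h w j = h z i then 1 else 0 := by
    intro w j; split_ifs <;> norm_num
  refine Finset.sum_pos' (fun w _ => mul_nonneg (Finset.prod_nonneg fun j _ => hq.1 _)
    (mul_nonneg (by positivity) (Finset.sum_nonneg fun j _ => hnn w j))) ⟨z, Finset.mem_univ _, ?_⟩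
  refine mul_pos hz (mul_pos (by positivity) ?_)
  exact Finset.sum_pos' (fun j _ => hnn z j) ⟨i, Finset.mem_univ _, by simp⟩

lemma converse {𝒳 𝒴 Z : Type} [Fintype 𝒳] [Fintype 𝒴] [Fintype Z]
    (q : 𝒳 × 𝒴 → ℝ) (hq : IsPmf q) {k m : ℕ}
    (f : (Fin (k + 1) → 𝒳 × 𝒴) → Fin m)
    (g : Fin m → (Fin (k + 1) → 𝒴) → Fin (k + 1) → Z)
    (h : (Fin (k + 1) → 𝒳 × 𝒴) → Fin (k + 1) → Z)
    (hh : ∀ z, h z = g (f z) (fun i => (z i).2)) :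
    condMI (fun t : 𝒳 × 𝒴 × Z => q (t.1, t.2.1) * avgChan q h (t.1, t.2.1) t.2.2)
      ≤ Real.logb 2 m / ((k + 1 : ℕ) : ℝ) := by
  set W := avgChan q h with hW
  have hWp : IsCondPmf W := avgChan_pmf q hq h
  set p : 𝒳 × 𝒴 × Z → ℝ := fun t => q (t.1, t.2.1) * W (t.1, t.2.1) t.2.2 with hp
  have hp0 : ∀ t, 0 ≤ p t := fun t => mul_nonneg (hq.1 _) ((hWp _).1 _)
  have hpq : ∀ x y, ∑ c, p (x, y, c) = q (x, y) := by
    intro x y; simp only [hp, ← Finset.mul_sum, (hWp _).2, mul_one]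
  set pB : 𝒴 → ℝ := fun y => ∑ a, q (a, y) with hpB
  set pBC : 𝒴 → Z → ℝ := fun y c => ∑ a, p (a, y, c) with hpBC
  have hpB0 : ∀ y, 0 ≤ pB y := fun y => Finset.sum_nonneg fun a _ => hq.1 _
  have hpBC0 : ∀ y c, 0 ≤ pBC y c := fun y c => Finset.sum_nonneg fun a _ => hp0 _
  set ρ : 𝒳 × 𝒴 → Z → ℝ := fun a c => p (a.1, a.2, c) * pB a.2 / (q a * pBC a.2 c) with hρ
  have hρ0 : ∀ a c, 0 ≤ ρ a c := fun a c =>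
    div_nonneg (mul_nonneg (hp0 _) (hpB0 _)) (mul_nonneg (hq.1 _) (hpBC0 _ _))
  -- key marginalization bound
  have hmarg : ∀ y c, ∑ x, q (x, y) * ρ (x, y) c ≤ pB y := by
    intro y c
    have h1 : ∀ x, q (x, y) * ρ (x, y) c ≤ p (x, y, c) * (pB y / pBC y c) := by
      intro x
      by_cases hqx : q (x, y) = 0
      · rw [hqx, zero_mul]
        exact mul_nonneg (hp0 _) (div_nonneg (hpB0 _) (hpBC0 _ _))
      · apply le_of_eq
        simp only [hρ]
        by_cases hb : pBC y c = 0
        · simp [hb]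
        · field_simp
    refine (Finset.sum_le_sum fun x _ => h1 x).trans ?_
    rw [← Finset.sum_mul]
    change pBC y c * (pB y / pBC y c) ≤ pB y
    by_cases hb : pBC y c = 0
    · simp [hb, hpB0]
    · rw [mul_div_cancel₀ _ hb]
  -- total mass bound
  have hmass : ∑ z : Fin (k + 1) → 𝒳 × 𝒴, (∏ j, q (z j)) * ∏ i, ρ (z i) (h z i) ≤ m := by
    have h1 : ∀ z : Fin (k + 1) → 𝒳 × 𝒴, (∏ j, q (z j)) * ∏ i, ρ (z i) (h z i) ≤
        ∑ w : Fin m, ∏ i, (q (z i) * ρ (z i) (g w (fun i => (z i).2) i)) := by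
      intro z
      rw [← Finset.prod_mul_distrib, hh]
      exact Finset.single_le_sum
        (f := fun w => ∏ i, (q (z i) * ρ (z i) (g w (fun i => (z i).2) i)))
        (fun w _ => Finset.prod_nonneg fun i _ => mul_nonneg (hq.1 _) (hρ0 _ _))
        (Finset.mem_univ (f z))
    refine (Finset.sum_le_sum fun z _ => h1 z).trans ?_
    rw [Finset.sum_comm]
    have h2 : ∀ w : Fin m, ∑ z : Fin (k + 1) → 𝒳 × 𝒴,
        ∏ i, (q (z i) * ρ (z i) (g w (fun i => (z i).2) i)) ≤ 1 := by
      intro w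
      rw [← (Equiv.arrowProdEquivProdArrow (Fin (k + 1)) (fun _ => 𝒳) (fun _ => 𝒴)).symm.sum_comp,
        Fintype.sum_prod_type_right]
      have h3 : ∀ y : Fin (k + 1) → 𝒴, ∑ x : Fin (k + 1) → 𝒳,
          ∏ i, (q (x i, y i) * ρ (x i, y i) (g w y i)) ≤ ∏ i, pB (y i) := by
        intro y
        have := (Finset.prod_univ_sum (fun _ : Fin (k + 1) => (Finset.univ : Finset 𝒳))
          (fun i x => q (x, y i) * ρ (x, y i) (g w y i))).symm
        rw [Fintype.piFinset_univ] at this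
        rw [this]
        exact Finset.prod_le_prod (fun i _ => Finset.sum_nonneg fun x _ =>
          mul_nonneg (hq.1 _) (hρ0 _ _)) (fun i _ => hmarg _ _)
      refine (Finset.sum_le_sum fun y _ => h3 y).trans ?_
      rw [iid_sum_one pB]
      rw [← hq.2, Fintype.sum_prod_type_right]
    refine (Finset.sum_le_sum fun w _ => h2 w).trans ?_
    simp
  have hsum1 : ∑ z : Fin (k + 1) → 𝒳 × 𝒴, ∏ j, q (z j) = 1 := iid_sum_one q hq.2 _
  have hmpos : 0 < m := by
    by_contra hm
    have hm : m = 0 := by omega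
    subst hm
    have : IsEmpty (Fin (k + 1) → 𝒳 × 𝒴) := ⟨fun z => (f z).elim0⟩
    simp at hsum1
  have hmR : (0 : ℝ) < m := by exact_mod_cast hmpos
  have hn : (0 : ℝ) < ((k + 1 : ℕ) : ℝ) := by positivity
  -- single letter expression
  set L : 𝒳 × 𝒴 → Z → ℝ := fun a c => Real.logb 2 (p (a.1, a.2, c)) + Real.logb 2 (pB a.2)
        - Real.logb 2 (q a) - Real.logb 2 (pBC a.2 c) with hL
  have hMI : condMI p = ∑ a, ∑ c, q a * W a c * L a c := by
    rw [sum_condMI]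
    simp only [Fintype.sum_prod_type, hpq]
    rfl
  rw [hMI, hW, avgChan_sum]
  have hterm : ∀ z : Fin (k + 1) → 𝒳 × 𝒴, (∏ j, q (z j)) * ∑ i, L (z i) (h z i) ≤
      (∏ j, q (z j)) * Real.logb 2 m +
        ((∏ j, q (z j)) * (∏ i, ρ (z i) (h z i)) / m - ∏ j, q (z j)) / Real.log 2 := by
    intro z
    rcases (Finset.prod_nonneg fun j _ => hq.1 (z j) : 0 ≤ ∏ j, q (z j)).eq_or_lt with h0 | hpos
    · rw [← h0]; simp
    have hpz : ∀ i, 0 < p ((z i).1, (z i).2, h z i) := fun i => avgChan_pos q hq h z hpos i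
    have hqz : ∀ i, 0 < q (z i) := fun i => by
      have := hpz i
      exact (hq.1 _).lt_of_ne fun h0 => by simp [hp, ← h0] at this
    have hBz : ∀ i, 0 < pB (z i).2 := fun i =>
      Finset.sum_pos' (fun a _ => hq.1 _) ⟨(z i).1, Finset.mem_univ _, hqz i⟩
    have hBCz : ∀ i, 0 < pBC (z i).2 (h z i) := fun i =>
      Finset.sum_pos' (fun a _ => hp0 _) ⟨(z i).1, Finset.mem_univ _, hpz i⟩
    have hLρ : ∀ i, L (z i) (h z i) = Real.logb 2 (ρ (z i) (h z i)) := by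
      intro i
      simp only [hL, hρ]
      rw [Real.logb_div (mul_pos (hpz i) (hBz i)).ne' (mul_pos (hqz i) (hBCz i)).ne',
        Real.logb_mul (hpz i).ne' (hBz i).ne', Real.logb_mul (hqz i).ne' (hBCz i).ne']
      ring
    have hρz : ∀ i, 0 < ρ (z i) (h z i) := fun i =>
      div_pos (mul_pos (hpz i) (hBz i)) (mul_pos (hqz i) (hBCz i))
    have hT : 0 < ∏ i, ρ (z i) (h z i) := Finset.prod_pos fun i _ => hρz i
    have hsumlog : ∑ i, L (z i) (h z i) = Real.logb 2 (∏ i, ρ (z i) (h z i)) := by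
      simp only [hLρ, Real.logb]
      rw [Real.log_prod (fun i _ => (hρz i).ne'), Finset.sum_div]
    have hlog2 : 0 < Real.log 2 := Real.log_pos (by norm_num)
    have hkey := Real.log_le_sub_one_of_pos (div_pos hT hmR)
    rw [Real.log_div hT.ne' hmR.ne'] at hkey
    rw [hsumlog]
    have : Real.logb 2 (∏ i, ρ (z i) (h z i)) ≤ Real.logb 2 m +
        ((∏ i, ρ (z i) (h z i)) / m - 1) / Real.log 2 := by
      simp only [Real.logb]
      rw [← add_div]
      gcongr
      linarith
    calc _ ≤ _ := mul_le_mul_of_nonneg_left this hpos.le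
      _ = _ := by ring
  have hfin : ∑ z : Fin (k + 1) → 𝒳 × 𝒴, (∏ j, q (z j)) * ∑ i, L (z i) (h z i) ≤
      Real.logb 2 m := by
    refine (Finset.sum_le_sum fun z _ => hterm z).trans ?_
    rw [Finset.sum_add_distrib, ← Finset.sum_mul, ← Finset.sum_div, Finset.sum_sub_distrib,
      ← Finset.sum_div, hsum1, one_mul]
    have : (∑ z : Fin (k + 1) → 𝒳 × 𝒴, (∏ j, q (z j)) * ∏ i, ρ (z i) (h z i)) / m ≤ 1 :=
      (div_le_one hmR).2 hmass
    have := div_nonpos_of_nonpos_of_nonneg (sub_nonpos.2 this)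
      (Real.log_pos (by norm_num : (1 : ℝ) < 2)).le
    linarith
  rw [le_div_iff₀ hn, Finset.sum_mul]
  refine le_trans (le_of_eq ?_) hfin
  refine Finset.sum_congr rfl fun z _ => ?_
  field_simp

lemma converse_code {𝒳 𝒴 Z : Type} [Fintype 𝒳] [Fintype 𝒴] [Fintype Z]
    (q : 𝒳 × 𝒴 → ℝ) (hq : IsPmf q) (δ : 𝒳 → Z → ℝ) {n m : ℕ} (hn : 0 < n)
    (f : (Fin n → 𝒳) × (Fin n → 𝒴) → Fin m)
    (g : Fin m × (Fin n → 𝒴) → Fin n → Z) :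
    ∃ W : 𝒳 × 𝒴 → Z → ℝ, IsCondPmf W ∧
      (∑ x, ∑ y, ∑ c, q (x, y) * W (x, y) c * δ x c) = Delta1 q δ f g ∧
      condMI (fun t : 𝒳 × 𝒴 × Z => q (t.1, t.2.1) * W (t.1, t.2.1) t.2.2)
        ≤ Real.logb 2 m / n := by
  obtain ⟨k, rfl⟩ : ∃ k, n = k + 1 := ⟨n - 1, by omega⟩
  let e := Equiv.arrowProdEquivProdArrow (Fin (k + 1)) (fun _ => 𝒳) (fun _ => 𝒴)
  let h : (Fin (k + 1) → 𝒳 × 𝒴) → Fin (k + 1) → Z := fun z => g (f (e z), (e z).2)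
  refine ⟨avgChan q h, avgChan_pmf q hq h, ?_, ?_⟩
  · have := avgChan_sum q h (fun a c => δ a.1 c)
    rw [Fintype.sum_prod_type] at this
    rw [this]
    unfold Delta1
    rw [← e.sum_comp]
    rfl
  · exact converse q hq (fun z => f (e z)) (fun w y => g (w, y)) h (fun z => rfl)

lemma continuous_H2 {S α : Type} [TopologicalSpace S] [Fintype α] (F : S → α → ℝ)
    (hF : ∀ a, Continuous fun s => F s a) : Continuous fun s => H2 (F s) := by
  unfold H2
  refine Continuous.neg (continuous_finsetSum _ fun a _ => ?_)
  have : (fun s => F s a * Real.logb 2 (F s a)) =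
      fun s => (F s a * Real.log (F s a)) / Real.log 2 := by
    funext s; simp [Real.logb, mul_div_assoc]
  rw [this]
  exact (Real.continuous_mul_log.comp (hF a)).div_const _

lemma continuous_cmi {𝒳 𝒴 Z : Type} [Fintype 𝒳] [Fintype 𝒴] [Fintype Z] (q : 𝒳 × 𝒴 → ℝ) :
    Continuous fun W : 𝒳 × 𝒴 → Z → ℝ =>
      condMI (fun t : 𝒳 × 𝒴 × Z => q (t.1, t.2.1) * W (t.1, t.2.1) t.2.2) := by
  unfold condMI
  refine ((Continuous.add ?_ ?_).sub ?_).sub ?_ <;>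
  · refine continuous_H2 _ fun a => ?_
    fun_prop

lemma compact_chan {A Z : Type} [Fintype A] [Fintype Z] :
    IsCompact {W : A → Z → ℝ | IsCondPmf W} := by
  refine (isCompact_Icc (a := (0 : A → Z → ℝ)) (b := 1)).of_isClosed_subset ?_ ?_
  · have : {W : A → Z → ℝ | IsCondPmf W} =
        ⋂ a, ((⋂ c, {W : A → Z → ℝ | 0 ≤ W a c}) ∩ {W : A → Z → ℝ | ∑ c, W a c = 1}) := by
      ext W; simp [IsCondPmf, IsPmf]
    rw [this]
    refine isClosed_iInter fun a => (isClosed_iInter fun c => ?_).inter ?_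
    · exact isClosed_le continuous_const (by fun_prop)
    · exact isClosed_eq (by fun_prop) continuous_const
  · intro W hW
    refine ⟨fun a c => (hW a).1 c, fun a c => ?_⟩
    have := Finset.single_le_sum (f := W a) (fun c _ => (hW a).1 c) (Finset.mem_univ c)
    rw [(hW a).2] at this
    exact this

lemma condRD_le {𝒳 𝒴 Z : Type} [Fintype 𝒳] [Fintype 𝒴] [Fintype Z]
    (q : 𝒳 × 𝒴 → ℝ) (δ : 𝒳 → Z → ℝ) (d r : ℝ)
    (H : ∀ ε > (0 : ℝ), ∃ W : 𝒳 × 𝒴 → Z → ℝ, IsCondPmf W ∧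
      (∑ x, ∑ y, ∑ c, q (x, y) * W (x, y) c * δ x c) ≤ d + ε ∧
      condMI (fun t : 𝒳 × 𝒴 × Z => q (t.1, t.2.1) * W (t.1, t.2.1) t.2.2) ≤ r + ε) :
    condRD q δ d ≤ r := by
  choose W hW1 hW2 hW3 using fun k : ℕ => H (1 / ((k : ℝ) + 1)) (by positivity)
  obtain ⟨V, hV, φ, hφ, hlim⟩ := compact_chan.tendsto_subseq hW1
  have hε : Filter.Tendsto (fun k : ℕ => 1 / ((φ k : ℝ) + 1)) Filter.atTop (nhds 0) :=
    tendsto_one_div_add_atTop_nhds_zero_nat.comp hφ.tendsto_atTop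
  have hdc : Continuous fun W : 𝒳 × 𝒴 → Z → ℝ =>
      ∑ x, ∑ y, ∑ c, q (x, y) * W (x, y) c * δ x c := by fun_prop
  have hd : (∑ x, ∑ y, ∑ c, q (x, y) * V (x, y) c * δ x c) ≤ d := by
    have h1 := (hdc.tendsto V).comp hlim
    have h2 := hε.const_add d
    rw [add_zero] at h2
    exact le_of_tendsto_of_tendsto' h1 h2 fun k => hW2 (φ k)
  have hr : condMI (fun t : 𝒳 × 𝒴 × Z => q (t.1, t.2.1) * V (t.1, t.2.1) t.2.2) ≤ r := by
    have h1 := ((continuous_cmi q).tendsto V).comp hlim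
    have h2 := hε.const_add r
    rw [add_zero] at h2
    exact le_of_tendsto_of_tendsto' h1 h2 fun k => hW3 (φ k)
  refine le_trans ?_ hr
  unfold condRD
  refine csInf_le ?_ ⟨V, hV, hd, rfl⟩
  refine (compact_chan.image (continuous_cmi (Z := Z) q)).bddBelow.mono ?_
  rintro _ ⟨U, hU, -, rfl⟩
  exact ⟨U, hU, rfl⟩

lemma pmf_swap {𝒳 𝒴 : Type} [Fintype 𝒳] [Fintype 𝒴] (q : 𝒳 × 𝒴 → ℝ) (hq : IsPmf q) :
    IsPmf (swap q) := by
  refine ⟨fun t => hq.1 _, ?_⟩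
  rw [← hq.2, Fintype.sum_prod_type, Fintype.sum_prod_type_right]
  rfl

lemma delta_swap {𝒳 𝒴 Z : Type} [Fintype 𝒳] [Fintype 𝒴] (q : 𝒳 × 𝒴 → ℝ)
    (δ : 𝒴 → Z → ℝ) {n m : ℕ}
    (f : (Fin n → 𝒳) × (Fin n → 𝒴) → Fin m)
    (g : Fin m × (Fin n → 𝒳) → Fin n → Z) :
    Delta1 (swap q) δ (fun yx => f yx.swap) g = Delta2 q δ f g := by
  unfold Delta1 Delta2
  rw [Fintype.sum_prod_type, Fintype.sum_prod_type_right]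
  rfl

lemma achievable_nonempty {𝒳 𝒴 Xh Yh : Type} [Fintype 𝒳] [Fintype 𝒴]
    [Fintype Xh] [Fintype Yh] (q : 𝒳 × 𝒴 → ℝ)
    (δ1 : 𝒳 → Xh → ℝ) (δ2 : 𝒴 → Yh → ℝ)
    (hδ1n : ∀ x, ∃ xh, δ1 x xh = 0) (hδ2n : ∀ y, ∃ yh, δ2 y yh = 0)
    (d1 d2 : ℝ) (hd1 : 0 ≤ d1) (hd2 : 0 ≤ d2) :
    {r : ℝ | 0 ≤ r ∧ RDAchievable q δ1 δ2 d1 d2 r}.Nonempty := by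
  choose u hu using hδ1n
  choose v hv using hδ2n
  let e := Fintype.equivFin ((Fin 1 → 𝒳) × (Fin 1 → 𝒴))
  refine ⟨max 0 (Real.logb 2 (Fintype.card ((Fin 1 → 𝒳) × (Fin 1 → 𝒴)))), le_max_left _ _, ?_⟩
  intro ε hε
  refine ⟨1, _, e, fun w i => u ((e.symm w.1).1 i), fun w i => v ((e.symm w.1).2 i),
    one_pos, ?_, ?_, ?_⟩
  · have := le_max_right 0 (Real.logb 2 (Fintype.card ((Fin 1 → 𝒳) × (Fin 1 → 𝒴))))
    simp only [Nat.cast_one, div_one]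
    linarith
  · simp only [Delta1, Equiv.symm_apply_apply, hu]
    simp
    linarith
  · simp only [Delta2, Equiv.symm_apply_apply, hv]
    simp
    linarith

end TWR

open TWR in
/-- Proposition 2: the cut-set lower bound
`R(d1,d2) ≥ max{R_{X|Y}(d1), R_{Y|X}(d2)}`. -/
theorem rd_cutset_lower_bound
    {𝒳 𝒴 Xh Yh : Type} [Fintype 𝒳] [Fintype 𝒴] [Fintype Xh] [Fintype Yh]
    (q : 𝒳 × 𝒴 → ℝ) (hq : IsPmf q)
    (δ1 : 𝒳 → Xh → ℝ) (δ2 : 𝒴 → Yh → ℝ) (d1max d2max : ℝ)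
    (hδ1 : ∀ x xh, 0 ≤ δ1 x xh ∧ δ1 x xh ≤ d1max)
    (hδ2 : ∀ y yh, 0 ≤ δ2 y yh ∧ δ2 y yh ≤ d2max)
    (hδ1n : ∀ x, ∃ xh, δ1 x xh = 0) (hδ2n : ∀ y, ∃ yh, δ2 y yh = 0)
    (d1 d2 : ℝ) (hd1 : 0 ≤ d1) (hd2 : 0 ≤ d2) :
    max (condRD q δ1 d1) (condRD (swap q) δ2 d2) ≤ RD q δ1 δ2 d1 d2 := by
  refine le_csInf (achievable_nonempty q δ1 δ2 hδ1n hδ2n d1 d2 hd1 hd2) ?_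
  rintro r ⟨-, hr⟩
  refine max_le ?_ ?_
  · refine condRD_le q δ1 d1 r fun ε hε => ?_
    obtain ⟨n, m, f, g1, g2, hn, hrate, h1, h2⟩ := hr ε hε
    obtain ⟨W, hW, hD, hI⟩ := converse_code q hq δ1 hn f g1
    exact ⟨W, hW, hD.trans_le h1, hI.trans hrate⟩
  · refine condRD_le (swap q) δ2 d2 r fun ε hε => ?_
    obtain ⟨n, m, f, g1, g2, hn, hrate, h1, h2⟩ := hr ε hε
    obtain ⟨W, hW, hD, hI⟩ :=
      converse_code (swap q) (pmf_swap q hq) δ2 hn (fun yx => f yx.swap) g2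
    rw [delta_swap] at hD
    exact ⟨W, hW, hD.trans_le h2, hI.trans hrate⟩
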